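/- Let k ∈ [n] with k ≥ 2, set i = 2k−1, and let X be a real (n−1)×2n matrix and L : NC_n → ℝ with Δ_I(X) = Σ_{σ ∈ E(I)} L_σ for every (n−1)-subset I ⊆ [2n]. Fix t ∈ ℝ and let X′ = X·u_i(t), where u_i(t) = x_i(t)·y_{i−1}(t) (so X′ is obtained from X by adding t times column i to column i+1 and t times column i to column i−1). Define L′ : NC_n → ℝ by: L′_σ = L_σ + t·Σ_κ L_κ if {k̄} is a singleton block of σ, where κ ranges over all noncrossing partitions obtained from σ by joining k̄ to exactly one other block of σ; and L′_σ = L_σ if {k̄} is not a singleton block of σ. Then Δ_I(X′) = Σ_{σ ∈ E(I)} L′_σ for every (n−1)-subset I ⊆ [2n]. -/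

import Mathlib

open Finset

noncomputable section
open scoped Classical

/-- The cyclic (clockwise) half-open interval `(a, b]` in `Fin m`. -/
def cIoc {m : ℕ} (a b : Fin m) : Finset (Fin m) :=
  univ.filter fun k => if a < b then a < k ∧ k ≤ b else a < k ∨ k ≤ b

/-- The open cyclic (clockwise) arc from `a` to `b` in `Fin m`, excluding both endpoints. -/
def cIoo {m : ℕ} (a b : Fin m) : Finset (Fin m) :=
  univ.filter fun k => if a < b then a < k ∧ k < b else (a < k ∨ k < b) ∧ k ≠ a ∧ k ≠ b

/-- Set partitions of `[n] = Fin n`. -/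
abbrev NCP (n : ℕ) := Finpartition (univ : Finset (Fin n))

/-- `a` and `b` lie in the same block of `σ`. -/
def sameBlock {n : ℕ} (σ : NCP n) (a b : Fin n) : Prop :=
  ∃ B ∈ σ.parts, a ∈ B ∧ b ∈ B

/-- `σ` is a noncrossing partition: there are no `a < b < c < d` with `a, c` in one
block and `b, d` in a different block. -/
def IsNoncrossing {n : ℕ} (σ : NCP n) : Prop :=
  ∀ a b c d : Fin n, a < b → b < c → c < d →
    sameBlock σ a c → sameBlock σ b d → sameBlock σ a b

/-- The relation defining the dual (Kreweras complement) partition: `ĩ ~ j̃` iff no block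
of `σ` meets both cyclic intervals `{(i+1), …, j}` and `{(j+1), …, i}`. -/
def dualRel {n : ℕ} (σ : NCP n) (i j : Fin n) : Prop :=
  i = j ∨ ¬ ∃ B ∈ σ.parts, (B ∩ cIoc i j).Nonempty ∧ (B ∩ cIoc j i).Nonempty

/-- The point `ī` of `[2n]` (0-based: `ī = 2i`). -/
def bar {n : ℕ} (i : Fin n) : Fin (2*n) := ⟨2*(i:ℕ), by have := i.isLt; omega⟩

/-- The point `ĩ` of `[2n]` (0-based: `ĩ = 2i+1`). -/
def til {n : ℕ} (i : Fin n) : Fin (2*n) := ⟨2*(i:ℕ)+1, by have := i.isLt; omega⟩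

/-- A matching (fixed-point-free involution) of `Fin m`. -/
def IsMatching {m : ℕ} (τ : Fin m → Fin m) : Prop :=
  Function.Involutive τ ∧ ∀ i, τ i ≠ i

/-- A noncrossing matching: there are no `a < b < c < d` with `τ a = c` and `τ b = d`. -/
def IsNCMatching {m : ℕ} (τ : Fin m → Fin m) : Prop :=
  ¬ ∃ a b c d : Fin m, a < b ∧ b < c ∧ c < d ∧ τ a = c ∧ τ b = d

/-- `j` is the cyclic predecessor of `i` in the block of `σ` containing `i`
(`j = i` when `i` is a singleton). -/
def cyclicPred {n : ℕ} (σ : NCP n) (j i : Fin n) : Prop :=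
  ∃ B ∈ σ.parts, i ∈ B ∧ j ∈ B ∧ ∀ x ∈ B, x ∉ cIoo j i

/-- `m` is the medial pairing of `σ`: it pairs `ī` (0-based `2i`) with `j̃` (0-based `2j+1`),
where `j` is the cyclic predecessor of `i` in its block. -/
def IsMedialOf {n : ℕ} (σ : NCP n) (m : Fin (2*n) → Fin (2*n)) : Prop :=
  ∀ i j : Fin n, m (bar i) = til j ↔ cyclicPred σ j i

/-- The crossing number of a matching: the number of pairs `{a,b}` with
`a < b < τ a < τ b`. -/
def crossNum {m : ℕ} (τ : Fin m → Fin m) : ℕ :=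
  ((univ : Finset (Fin m × Fin m)).filter fun p =>
    p.1 < p.2 ∧ p.2 < τ p.1 ∧ τ p.1 < τ p.2).card

/-- `a`, `b`, `c`, `d` are distinct and in cyclic order on `Fin m`. -/
def CyclicOrder4 {m : ℕ} (a b c d : Fin m) : Prop :=
  (a < b ∧ b < c ∧ c < d) ∨ (b < c ∧ c < d ∧ d < a) ∨
  (c < d ∧ d < a ∧ a < b) ∨ (d < a ∧ a < b ∧ b < c)

/-- `τ` covers `τ'` in the uncrossing order. -/
def UncrossCover {m : ℕ} (τ' τ : Fin m → Fin m) : Prop :=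
  IsMatching τ' ∧ IsMatching τ ∧
  ∃ a b c d : Fin m, CyclicOrder4 a b c d ∧ τ a = c ∧ τ b = d ∧
    (∀ x, x ≠ a → x ≠ b → x ≠ c → x ≠ d → τ' x = τ x) ∧
    ((τ' a = d ∧ τ' b = c ∧ ∀ x ∈ cIoo a b, τ x ∉ cIoo c d) ∨
     (τ' a = b ∧ τ' c = d ∧ ∀ x ∈ cIoo b c, τ x ∉ cIoo d a))

/-- The uncrossing partial order on matchings: reflexive-transitive closure of covers. -/
def uncrossLE {m : ℕ} (τ' τ : Fin m → Fin m) : Prop :=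
  Relation.ReflTransGen UncrossCover τ' τ

/-- An affine permutation of period `m`. -/
def IsAffinePerm (m : ℕ) (f : ℤ → ℤ) : Prop :=
  Function.Bijective f ∧ ∀ i : ℤ, f (i + m) = f i + m

/-- The length of an affine permutation of period `m`:
`#{(i,j) : 1 ≤ i ≤ m, i < j, f i > f j}`. -/
def affLen (m : ℕ) (f : ℤ → ℤ) : ℕ :=
  Set.ncard {p : ℤ × ℤ | 1 ≤ p.1 ∧ p.1 ≤ (m:ℤ) ∧ p.1 < p.2 ∧ f p.2 < f p.1}

/-- The affine rank matrix `r_f(i,j) = #{a ≤ i : f a ≥ j}`. -/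
def rankMat (f : ℤ → ℤ) (i j : ℤ) : ℕ :=
  Set.ncard {a : ℤ | a ≤ i ∧ j ≤ f a}

/-- Affine Bruhat order via rank matrices. -/
def bruhatLE (f g : ℤ → ℤ) : Prop := ∀ i j : ℤ, rankMat f i j ≤ rankMat g i j

/-- The sum `Σ_{i=1}^m (f i − i)`. -/
def windowSum (m : ℕ) (f : ℤ → ℤ) : ℤ :=
  ∑ i ∈ Finset.range m, (f ((i:ℤ)+1) - ((i:ℤ)+1))

/-- The affine permutation `g_τ` associated to a matching `τ` of `[2n]`:
on `[2n]`, `g_τ i = τ i` if `τ i > i` and `g_τ i = τ i + 2n` if `τ i < i`,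
extended periodically. -/
def gTau (n : ℕ) (τ : Fin (2*n) → Fin (2*n)) (i : ℤ) : ℤ :=
  if h : (i % ((2*n : ℕ) : ℤ)).toNat < 2*n then
    let r : Fin (2*n) := ⟨(i % ((2*n : ℕ) : ℤ)).toNat, h⟩
    (i - i % ((2*n : ℕ) : ℤ)) +
      (if r < τ r then ((τ r : ℕ) : ℤ) else ((τ r : ℕ) : ℤ) + 2*n)
  else i

/-- `f_τ = g_τ − 1`. -/
def fTau (n : ℕ) (τ : Fin (2*n) → Fin (2*n)) (i : ℤ) : ℤ := gTau n τ i - 1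

/-- An electrical affine permutation for `n`. -/
def IsElectrical (n : ℕ) (f : ℤ → ℤ) : Prop :=
  IsAffinePerm (2*n) f ∧
  (∀ i : ℤ, i ≤ f i ∧ f i ≤ i + 2*n - 2) ∧
  windowSum (2*n) f = ((n:ℤ) - 1) * (2*n) ∧
  ∀ i : ℤ, (f (f i + 1) - (i - 1)) % ((2*n : ℕ) : ℤ) = 0

/-- The Grassmann necklace subset `I_a(f) ⊆ [m]`: representatives in `[m]` (0-based) of
`{f b mod m : b < a and f b ≥ a}`. -/
def necklaceI (m : ℕ) (f : ℤ → ℤ) (a : ℤ) : Finset (Fin m) :=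
  univ.filter fun x => ∃ b : ℤ, b < a ∧ a ≤ f b ∧ f b % (m:ℤ) = ((x:ℕ):ℤ)

/-- The dual necklace subset `J_a(f) ⊆ [m]`: representatives in `[m]` (0-based) of
`{b mod m : b < a and f b ≥ a}`. -/
def necklaceJ (m : ℕ) (f : ℤ → ℤ) (a : ℤ) : Finset (Fin m) :=
  univ.filter fun x => ∃ b : ℤ, b < a ∧ a ≤ f b ∧ b % (m:ℤ) = ((x:ℕ):ℤ)

/-- Dominance order on `k`-element subsets of `Fin m`:
the `r`-th smallest element of `I` is at most the `r`-th smallest element of `J`. -/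
def domLE {m : ℕ} (k : ℕ) (I J : Finset (Fin m)) : Prop :=
  ∃ (hI : I.card = k) (hJ : J.card = k),
    ∀ r : Fin k, I.orderEmbOfFin hI r ≤ J.orderEmbOfFin hJ r

/-- `a`-shifted dominance order: rotate so that `a` becomes least, then compare. -/
def sdomLE {m : ℕ} (k : ℕ) (a : Fin m) (I J : Finset (Fin m)) : Prop :=
  domLE k (I.image (· - a)) (J.image (· - a))

/-- `a`-shifted lexicographic order on subsets of `Fin m`. -/
def lexLE {m : ℕ} (a : Fin m) (I J : Finset (Fin m)) : Prop :=
  I = J ∨ List.Lex (· < ·) ((I.image (· - a)).sort (· ≤ ·)) ((J.image (· - a)).sort (· ≤ ·))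

/-- A Catalan subset of `[2n]` (0-based): an `(n−1)`-subset such that the length-`2n`
word with `U` at positions `{0} ∪ {x+1 : x ∈ I}` and `D` elsewhere is a Dyck path. -/
def IsCatalan {n : ℕ} (I : Finset (Fin (2*n))) : Prop :=
  I.card = n - 1 ∧
  ∀ p : ℕ, p ≤ 2*n →
    p ≤ 2 * ((insert 0 (I.image fun x => (x:ℕ)+1)).filter (· < p)).card

/-- Catalan subset with respect to the shifted order `≤_a`. -/
def IsCatalanAt {n : ℕ} (a : Fin (2*n)) (I : Finset (Fin (2*n))) : Prop :=
  IsCatalan (I.image (· - a))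

/-- The set of maxima of `S` with respect to the `a`-shifted order. -/
def maxAt {m : ℕ} (a : Fin m) (S : Finset (Fin m)) : Finset (Fin m) :=
  S.filter fun x => ∀ y ∈ S, y - a ≤ x - a

/-- `I_a(σ)` for a noncrossing partition `σ`: the complement in `[2n]` of the set of
`≤_a`-maxima of the blocks of `σ` (embedded by `bar`) and of the blocks of the dual
partition `σ̃` (embedded by `til`). -/
def IaP {n : ℕ} (σ : NCP n) (a : Fin (2*n)) : Finset (Fin (2*n)) :=
  univ \ ((σ.parts.biUnion fun B => maxAt a (B.image bar)) ∪
          ((univ : Finset (Fin n)).biUnion fun i =>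
            maxAt a ((univ.filter (dualRel σ i)).image til)))

/-- `I` is concordant with `σ`: `I` has `n−1` elements and every block of `σ` and of
its dual `σ̃` contains exactly one element of `[2n] ∖ I`. -/
def Concordant {n : ℕ} (σ : NCP n) (I : Finset (Fin (2*n))) : Prop :=
  I.card = n - 1 ∧
  (∀ B ∈ σ.parts, ((B.image bar) ∩ (univ \ I)).card = 1) ∧
  (∀ i : Fin n, (((univ.filter (dualRel σ i)).image til) ∩ (univ \ I)).card = 1)

/-- `E(I)`: the set of noncrossing partitions concordant with `I`. -/
def ESet {n : ℕ} (I : Finset (Fin (2*n))) : Set (NCP n) :=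
  {σ | IsNoncrossing σ ∧ Concordant σ I}

/-- The maximal minor `Δ_I(X)` on the columns indexed by `I`, in increasing order. -/
def minorOn {k m : ℕ} (X : Matrix (Fin k) (Fin m) ℝ) (I : Finset (Fin m)) : ℝ :=
  if h : I.card = k then (X.submatrix id fun r => I.orderEmbOfFin h r).det else 0

/-- `X` is totally nonnegative: it has full rank `k` and all maximal minors are `≥ 0`. -/
def IsTNN {k m : ℕ} (X : Matrix (Fin k) (Fin m) ℝ) : Prop :=
  X.rank = k ∧ ∀ I : Finset (Fin m), I.card = k → 0 ≤ minorOn X I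

/-- `t` times the matrix unit `E_{p,q}` (0-based indices). -/
def matE (m : ℕ) (p q : ℕ) (t : ℝ) : Matrix (Fin m) (Fin m) ℝ :=
  Matrix.of fun r s => if (r:ℕ) = p ∧ (s:ℕ) = q then t else 0

/-- `x_i(t) = Id + t·E_{i,i+1}` (1-based index `i`). -/
def xB (m i : ℕ) (t : ℝ) : Matrix (Fin m) (Fin m) ℝ := 1 + matE m (i-1) i t

/-- `y_i(t) = Id + t·E_{i+1,i}` (1-based index `i`). -/
def yB (m i : ℕ) (t : ℝ) : Matrix (Fin m) (Fin m) ℝ := 1 + matE m i (i-1) t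

/-- `u_i(t) = x_i(t)·y_{i−1}(t)` (1-based index `i`). -/
def uB (m i : ℕ) (t : ℝ) : Matrix (Fin m) (Fin m) ℝ := xB m i t * yB m (i-1) t

/-- The columns of `X`, extended `n`-periodically to all integer indices (0-based). -/
def colP {k n : ℕ} (X : Matrix (Fin k) (Fin n) ℝ) (i : ℤ) : Fin k → ℝ :=
  fun r => if h : (i % (n:ℤ)).toNat < n then X r ⟨(i % (n:ℤ)).toNat, h⟩ else 0

/-- `f_X(i) = min { j ≥ i : v_i ∈ span(v_{i+1}, …, v_j) }` (0-based columns). -/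
def fX {k n : ℕ} (X : Matrix (Fin k) (Fin n) ℝ) (i : ℤ) : ℤ :=
  sInf {j : ℤ | i ≤ j ∧ colP X i ∈ Submodule.span ℝ (colP X '' Set.Ioc i j)}

/-- Fintype instance for finite partitions of a finite set. -/
instance {α : Type*} [DecidableEq α] [Fintype α] (s : Finset α) : Fintype (Finpartition s) :=
  Fintype.ofInjective Finpartition.parts fun _ _ h => Finpartition.ext h

/-- The sorted list of (the values of) a subset of `Fin m`. -/
def sortedL {m : ℕ} (I : Finset (Fin m)) : List ℕ :=
  (I.sort (· ≤ ·)).map Fin.val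

/-- The number of inversions of a list (= the number of adjacent transpositions
needed to sort it, when entries are distinct). -/
def invNum (l : List ℕ) : ℕ :=
  ((Finset.range l.length ×ˢ Finset.range l.length).filter fun pq =>
    pq.1 < pq.2 ∧ l.getD pq.2 0 < l.getD pq.1 0).card

/-- The subset of `Fin m` whose values lie in the list `l`. -/
def toFinF {m : ℕ} (l : List ℕ) : Finset (Fin m) :=
  univ.filter fun x => (x:ℕ) ∈ l

/-- The double sum `Σ_{σ ∈ E(l), κ ∈ E(l')} L σ · L κ`, where `E` of a list with a
repeated entry (or an out-of-range entry) is empty. -/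
def pairSum {n : ℕ} (L : NCP n → ℝ) (l l' : List ℕ) : ℝ :=
  if (l.Nodup ∧ ∀ x ∈ l, x < 2*n) ∧ (l'.Nodup ∧ ∀ x ∈ l', x < 2*n) then
    ∑ᶠ σ ∈ ESet (n := n) (toFinF l), ∑ᶠ κ ∈ ESet (n := n) (toFinF l'), L σ * L κ
  else 0

/-- The list obtained from `LI` by replacing its entries at the positions in `S`
(in increasing order of position) by the first `#S` entries of `LJ`. -/
def swapI (LI LJ : List ℕ) (S : Finset ℕ) : List ℕ :=
  (List.range LI.length).map fun p =>
    if p ∈ S then LJ.getD ((S.filter (· < p)).card) 0 else LI.getD p 0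

/-- The list obtained from `LJ` by replacing its first `#S` entries by the entries of
`LI` at the positions in `S`, in increasing order. -/
def swapJ (LI LJ : List ℕ) (S : Finset ℕ) : List ℕ :=
  (List.range LJ.length).map fun p =>
    if p < S.card then LI.getD ((S.sort (· ≤ ·)).getD p 0) 0 else LJ.getD p 0

/-- the set of noncrossing partitions obtained from `σ` by merging the singleton
block `{kb}` into one other block of `σ` -/
def mergeSet {n : ℕ} (kb : Fin n) (σ : NCP n) : Set (NCP n) :=
  {κ | IsNoncrossing κ ∧ ∃ B ∈ σ.parts, B ≠ {kb} ∧
    κ.parts = insert (insert kb B) ((σ.parts.erase B).erase {kb})}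

/-! Right multiplication by `u_i(t)` adds `t` times the column `k̄` to the two neighbouring
columns, which are indexed by the gaps before and after `k̄`. Hence it changes `Δ_I` by
`t` times the sum of the minors on the sets obtained from `I` by exchanging one of these two gap
points for `k̄`, where such an exchange is possible.

A set is concordant with a noncrossing partition when its complement is a transversal both of the
blocks and of the dual blocks. Splitting `k̄` off a noncrossing partition `κ` in which it is not a
singleton isolates `k̄` among the blocks, and unites the two distinct dual blocks containing the
adjacent gaps. The transversals of an equivalence relation with two classes united are exactly the
sets that become transversals of the original relation after adding one of two chosen
representatives of these classes, and only one of them will do. Thus `I` is concordant with the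
split partition iff `κ` is concordant with exactly one of the two exchanged sets, and summing `L_κ`
over all such `κ` gives the two minors above. -/

section Transversal

variable {α : Type*} {r : Setoid α} {T : Set α} {c m u v z : α}

/-- `T` is a transversal (system of representatives) of the classes of `r`. -/
def IsTransversal (r : Setoid α) (T : Set α) : Prop :=
  ∀ a, ∃! b, b ∈ T ∧ r a b

/-- The equivalence relation obtained from `s` by uniting the classes of `u` and `v`. -/
def glue (s : Setoid α) (u v : α) : Setoid α where
  r a b := s a b ∨ (s a u ∨ s a v) ∧ (s b u ∨ s b v)
  iseqv :=
    { refl := fun a => .inl (s.refl a)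
      symm := by
        rintro a b (h | ⟨ha, hb⟩)
        exacts [.inl (s.symm h), .inr ⟨hb, ha⟩]
      trans := by
        rintro a b d (h | ⟨ha, hb⟩) (h' | ⟨hb', hd⟩)
        · exact .inl (s.trans h h')
        · exact .inr ⟨hb'.imp (s.trans h) (s.trans h), hd⟩
        · exact .inr ⟨ha, hb.imp (s.trans (s.symm h')) (s.trans (s.symm h'))⟩
        · exact .inr ⟨ha, hd⟩ }

lemma glue_apply (a b : α) : glue r u v a b ↔ r a b ∨ (r a u ∨ r a v) ∧ (r b u ∨ r b v) :=
  Iff.rfl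

lemma glue_comm (r : Setoid α) (u v : α) : glue r u v = glue r v u := by
  ext a b
  rw [glue_apply, glue_apply, or_comm (a := r a u), or_comm (a := r b u)]

lemma isTransversal_iff_forall_ne (hmc : m ≠ c) (hcm : r c m) :
    IsTransversal r T ↔ ∀ a ≠ c, ∃! b, b ∈ T ∧ r a b := by
  refine ⟨fun h a _ => h a, fun h a => ?_⟩
  by_cases hac : a = c
  · have hiff (b : α) : r a b ↔ r m b :=
      ⟨r.trans (hac ▸ r.symm hcm), r.trans (hac ▸ hcm)⟩
    simpa only [hiff] using h m hmc
  · exact h a hac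

lemma isTransversal_inf_ker_eq_iff (hmc : m ≠ c) (hcm : r c m) :
    IsTransversal (r ⊓ Setoid.ker (· = c)) T ↔ c ∈ T ∧ IsTransversal r (T \ {c}) := by
  have hc : (∃! b, b ∈ T ∧ (r ⊓ Setoid.ker (· = c)) c b) ↔ c ∈ T := by
    simp only [Setoid.inf_def, Pi.inf_apply, inf_Prop_eq, Setoid.ker_def, eq_iff_iff, true_iff]
    exact ⟨fun ⟨_, ⟨hb, _, hbc⟩, _⟩ => hbc ▸ hb,
      fun h => ⟨c, ⟨h, r.refl c, rfl⟩, fun _ hb => hb.2.2⟩⟩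
  have hne (a : α) (ha : a ≠ c) (b : α) :
      b ∈ T ∧ (r ⊓ Setoid.ker (· = c)) a b ↔ b ∈ T \ {c} ∧ r a b := by
    simp only [Setoid.inf_def, Pi.inf_apply, inf_Prop_eq, Setoid.ker_def, eq_iff_iff, ha, false_iff,
      Set.mem_sdiff, Set.mem_singleton_iff]
    tauto
  rw [isTransversal_iff_forall_ne hmc hcm]
  constructor
  · exact fun h => ⟨hc.1 (h c), fun a ha => by simpa only [hne a ha] using h a⟩
  · rintro ⟨hcT, h⟩ a
    by_cases ha : a = c
    · exact ha ▸ hc.2 hcT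
    · simpa only [hne a ha] using h a ha

namespace IsTransversal

lemma eq_of_rel (h : IsTransversal r T) {a b : α} (ha : a ∈ T) (hb : b ∈ T) (hab : r a b) :
    a = b :=
  (h a).unique ⟨ha, r.refl a⟩ ⟨hb, hab⟩

lemma of_exists (hex : ∀ a, ∃ b ∈ T, r a b) (heq : ∀ a ∈ T, ∀ b ∈ T, r a b → a = b) :
    IsTransversal r T := fun a => by
  obtain ⟨b, hb, hab⟩ := hex a
  exact ⟨b, ⟨hb, hab⟩, fun b' h => heq b' h.1 b hb (r.trans (r.symm h.2) hab)⟩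

lemma rel_of_insert_of_insert (huT : u ∉ T) (hu : IsTransversal r (insert u T))
    (hv : IsTransversal r (insert v T)) : r u v := by
  obtain ⟨w, ⟨rfl | hw, huw⟩, -⟩ := hv u
  · exact huw
  · exact absurd (hu.eq_of_rel (.inl rfl) (.inr hw) huw ▸ hw) huT

lemma glue_of_insert (huv : ¬ r u v) (huT : u ∉ T) (h : IsTransversal r (insert u T)) :
    IsTransversal (glue r u v) T := by
  have hu (b : α) (hb : b ∈ T) : ¬ r b u := fun hbu =>
    huT (h.eq_of_rel (.inr hb) (.inl rfl) hbu ▸ hb)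
  refine of_exists (fun a => ?_) fun a ha b hb hab => ?_
  · obtain ⟨b, ⟨rfl | hb, hab⟩, -⟩ := h a
    · obtain ⟨w, ⟨rfl | hw, hvw⟩, -⟩ := h v
      · exact absurd (r.symm hvw) huv
      · exact ⟨w, hw, .inr ⟨.inl hab, .inr (r.symm hvw)⟩⟩
    · exact ⟨b, hb, .inl hab⟩
  · refine h.eq_of_rel (.inr ha) (.inr hb) (hab.elim id fun ⟨ha', hb'⟩ => ?_)
    exact r.trans (ha'.resolve_left (hu a ha)) (r.symm (hb'.resolve_left (hu b hb)))

lemma insert_of_glue (huv : ¬ r u v) (h : IsTransversal (glue r u v) T) (hz : z ∈ T)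
    (hzv : r z v) : u ∉ T ∧ IsTransversal r (insert u T) := by
  have hu (b : α) (hb : b ∈ T) : ¬ r b u := fun hbu => by
    obtain rfl := h.eq_of_rel hb hz (.inr ⟨.inl hbu, .inr hzv⟩)
    exact huv (r.trans (r.symm hbu) hzv)
  refine ⟨fun huT => hu u huT (r.refl u), of_exists (fun a => ?_) ?_⟩
  · obtain ⟨b, ⟨hb, hab | ⟨hau | hav, -⟩⟩, -⟩ := h a
    · exact ⟨b, .inr hb, hab⟩
    · exact ⟨u, .inl rfl, hau⟩
    · exact ⟨z, .inr hz, r.trans hav (r.symm hzv)⟩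
  · rintro a (rfl | ha) b (rfl | hb) hab
    · rfl
    · exact absurd (r.symm hab) (hu b hb)
    · exact absurd hab (hu a ha)
    · exact h.eq_of_rel ha hb (.inl hab)

end IsTransversal

lemma isTransversal_glue_iff (huv : ¬ r u v) :
    IsTransversal (glue r u v) T ↔
      (u ∉ T ∧ IsTransversal r (insert u T)) ∨ (v ∉ T ∧ IsTransversal r (insert v T)) := by
  have hvu : ¬ r v u := fun h => huv (r.symm h)
  constructor
  · intro h
    obtain ⟨z, ⟨hz, huz⟩, -⟩ := h u
    have hzuv : r z u ∨ r z v := huz.elim (fun huz => .inl (r.symm huz)) And.right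
    exact hzuv.symm.imp (h.insert_of_glue huv hz) ((glue_comm r u v ▸ h).insert_of_glue hvu hz)
  · rintro (⟨hu, h⟩ | ⟨hv, h⟩)
    · exact h.glue_of_insert huv hu
    · exact glue_comm r v u ▸ h.glue_of_insert hvu hv

end Transversal

/-- The chord joining the points `a` and `b` does not separate `i` from `j`, where `i` and `j` stand
for the gaps immediately after the points of the same name (the points `ĩ` and `j̃` of the paper,
while `a`, `b` are `ā`, `b̄`). -/
def SameSide {α : Type*} [LE α] (a b i j : α) : Prop :=
  (a ≤ i ↔ b ≤ i) ↔ (a ≤ j ↔ b ≤ j)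

namespace SameSide

section LE

variable {α : Type*} [LE α] {a b d i j : α}

lemma self_left (a i j : α) : SameSide a a i j := by simp [SameSide]

lemma self_right (a b i : α) : SameSide a b i i := Iff.rfl

lemma left_comm : SameSide a b i j ↔ SameSide b a i j := by
  unfold SameSide; tauto

lemma right_symm (h : SameSide a b i j) : SameSide a b j i := Iff.symm h

lemma right_comm : SameSide a b i j ↔ SameSide a b j i := ⟨right_symm, right_symm⟩

lemma left_trans (h : SameSide a b i j) (h' : SameSide b d i j) : SameSide a d i j := by
  unfold SameSide at *; tauto

lemma right_trans (h : SameSide a b i j) (h' : SameSide a b j d) : SameSide a b i d :=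
  Iff.trans h h'

lemma right_of_not_of_not (h : ¬ SameSide a b i j) (h' : ¬ SameSide a b j d) :
    SameSide a b i d := by
  unfold SameSide at *; tauto

end LE

section LinearOrder

variable {α : Type*} [LinearOrder α] {a b c i j m p : α}

lemma of_covBy_of_ne (hpc : p ⋖ c) (ha : a ≠ c) (hb : b ≠ c) : SameSide a b p c := by
  simp only [SameSide, hpc.le_iff_lt_left, ha.le_iff_lt, hb.le_iff_lt]

lemma not_of_covBy_of_ne (hpc : p ⋖ c) (hmc : m ≠ c) : ¬ SameSide c m p c := by
  simp only [SameSide, hpc.le_iff_lt_left, hmc.le_iff_lt, lt_irrefl, le_refl, false_iff, true_iff]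
  tauto

lemma of_separated (hc : ¬ SameSide a b c i) (hij : SameSide a b i j)
    (hm : m = a ∨ SameSide a b c m) : SameSide c m i j := by
  unfold SameSide at *
  grind

end LinearOrder

end SameSide

section SplitOff

variable {α : Type*} [Fintype α] [DecidableEq α] {P Q : Finpartition (univ : Finset α)} {c : α}

/-- The partition obtained from `P` by removing the point `c` from its block and making it a
singleton block. -/
def splitOff (P : Finpartition (univ : Finset α)) (c : α) : Finpartition (univ : Finset α) :=
  (P.avoid {c}).extend (singleton_ne_empty c) sdiff_disjoint (sdiff_sup_cancel (subset_univ {c}))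

lemma mem_parts_splitOff {C : Finset α} :
    C ∈ (splitOff P c).parts ↔ C = {c} ∨ ∃ D ∈ P.parts, ¬ D ⊆ {c} ∧ D.erase c = C := by
  simp only [splitOff, Finpartition.extend_parts, mem_insert, Finpartition.mem_avoid,
    sdiff_singleton_eq_erase]

lemma singleton_mem_parts_splitOff : {c} ∈ (splitOff P c).parts :=
  mem_parts_splitOff.2 (.inl rfl)

lemma parts_splitOff (hc : {c} ∉ P.parts) :
    (splitOff P c).parts = insert {c} (insert ((P.part c).erase c) (P.parts.erase (P.part c))) := by
  have hne (D : Finset α) (hD : D ∈ P.parts) : ¬ D ⊆ {c} := fun h =>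
    hc ((P.nonempty_of_mem_parts hD).subset_singleton_iff.1 h ▸ hD)
  have herase (D : Finset α) (hD : D ∈ P.parts) (hDc : D ≠ P.part c) : D.erase c = D :=
    erase_eq_of_notMem fun h => hDc (P.part_eq_of_mem hD h).symm
  ext C
  simp only [mem_parts_splitOff, mem_insert, mem_erase]
  refine or_congr_right ⟨?_, ?_⟩
  · rintro ⟨D, hD, -, rfl⟩
    by_cases hDc : D = P.part c
    · exact .inl (hDc ▸ rfl)
    · exact .inr ((herase D hD hDc).symm ▸ ⟨hDc, hD⟩)
  · rintro (rfl | ⟨hCc, hC⟩)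
    · have hpart : P.part c ∈ P.parts := P.part_mem.2 (mem_univ c)
      exact ⟨_, hpart, hne _ hpart, rfl⟩
    · exact ⟨C, hC, hne C hC, herase C hC hCc⟩

lemma splitOff_eq_of_parts_eq {B : Finset α} (hc : {c} ∈ P.parts) (hB : B ∈ P.parts)
    (hBc : B ≠ {c}) (hQ : Q.parts = insert (insert c B) ((P.parts.erase B).erase {c})) :
    {c} ∉ Q.parts ∧ splitOff Q c = P := by
  have hcB : c ∉ B := fun h => hBc (P.eq_of_mem_parts hB hc h (mem_singleton_self c))
  have hpart : Q.part c = insert c B :=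
    Q.part_eq_of_mem (hQ ▸ mem_insert_self _ _) (mem_insert_self c B)
  obtain ⟨b, hb⟩ := P.nonempty_of_mem_parts hB
  have hins : insert c B ∉ P.parts := fun h =>
    hcB (P.eq_of_mem_parts h hB (mem_insert_of_mem hb) hb ▸ mem_insert_self c B)
  have hins' : insert c B ∉ (P.parts.erase B).erase {c} := fun h =>
    hins (mem_of_mem_erase (mem_of_mem_erase h))
  have hcQ : {c} ∉ Q.parts := fun h =>
    hins (hpart ▸ (Q.part_eq_of_mem h (mem_singleton_self c)).symm ▸ hc)
  refine ⟨hcQ, Finpartition.ext ?_⟩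
  rw [parts_splitOff hcQ, hpart, hQ, erase_insert hins', erase_insert hcB,
    erase_right_comm, insert_comm, erase_right_comm, insert_erase (mem_erase.2 ⟨hBc.symm, hc⟩),
    insert_erase hB]

lemma parts_eq_of_splitOff (hc : {c} ∉ Q.parts) :
    Q.parts = insert (insert c ((Q.part c).erase c))
      (((splitOff Q c).parts.erase ((Q.part c).erase c)).erase {c}) := by
  have hpart : Q.part c ∈ Q.parts := Q.part_mem.2 (mem_univ c)
  have hcpart : c ∈ Q.part c := Q.mem_part (mem_univ c)
  have herase : (Q.part c).erase c ∉ Q.parts.erase (Q.part c) := by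
    intro h
    obtain ⟨b, hb⟩ := Q.nonempty_of_mem_parts (mem_of_mem_erase h)
    exact ne_of_mem_erase h
      (Q.eq_of_mem_parts (mem_of_mem_erase h) hpart hb (mem_of_mem_erase hb))
  have hc' : {c} ∉ Q.parts.erase (Q.part c) := fun h => hc (mem_of_mem_erase h)
  have hne : {c} ≠ (Q.part c).erase c := fun h => notMem_erase c _ (h ▸ mem_singleton_self c)
  rw [parts_splitOff hc, insert_erase hcpart, insert_comm, erase_insert, erase_insert hc',
    insert_erase hpart]
  simp only [mem_insert, hne.symm, herase, or_self, not_false_eq_true]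

lemma exists_merge_iff (hc : {c} ∈ P.parts) :
    (∃ B ∈ P.parts, B ≠ {c} ∧ Q.parts = insert (insert c B) ((P.parts.erase B).erase {c})) ↔
      {c} ∉ Q.parts ∧ splitOff Q c = P := by
  constructor
  · rintro ⟨B, hB, hBc, hQ⟩
    exact splitOff_eq_of_parts_eq hc hB hBc hQ
  · rintro ⟨hcQ, rfl⟩
    refine ⟨(Q.part c).erase c, ?_, fun h => ?_, parts_eq_of_splitOff hcQ⟩
    · simp [parts_splitOff hcQ]
    · exact notMem_erase c _ (h ▸ mem_singleton_self c)

end SplitOff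

section Noncrossing

variable {n : ℕ} {σ κ : NCP n} {a b c d : Fin n}

lemma sameBlock_iff_mem {B : Finset (Fin n)} (hB : B ∈ σ.parts) (ha : a ∈ B) :
    sameBlock σ a b ↔ b ∈ B :=
  ⟨fun ⟨_, hC, ha', hb⟩ => σ.eq_of_mem_parts hC hB ha' ha ▸ hb, fun hb => ⟨B, hB, ha, hb⟩⟩

/-- The equivalence relation on `[n]` whose classes are the blocks of `σ`. -/
def blockSetoid (σ : NCP n) : Setoid (Fin n) where
  r := sameBlock σ
  iseqv :=
    { refl := fun a => ⟨σ.part a, σ.part_mem.2 (mem_univ a), σ.mem_part (mem_univ a),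
        σ.mem_part (mem_univ a)⟩
      symm := fun ⟨B, hB, ha, hb⟩ => ⟨B, hB, hb, ha⟩
      trans := fun ⟨B, hB, ha, hb⟩ h => ⟨B, hB, ha, (sameBlock_iff_mem hB hb).1 h⟩ }

lemma singleton_notMem_parts_iff : {c} ∉ σ.parts ↔ ∃ m ≠ c, sameBlock σ c m := by
  constructor
  · intro hc
    have hpart := σ.part_mem.2 (mem_univ c)
    have hcpart := σ.mem_part (mem_univ c)
    by_contra! h
    refine hc ((eq_singleton_iff_unique_mem.2 ⟨hcpart, fun b hb => ?_⟩ : σ.part c = {c}) ▸ hpart)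
    by_contra hbc
    exact h b hbc ((sameBlock_iff_mem hpart hcpart).2 hb)
  · rintro ⟨m, hmc, hm⟩ hc
    exact hmc (mem_singleton.1 ((sameBlock_iff_mem hc (mem_singleton_self c)).1 hm))

lemma sameBlock_splitOff_iff :
    sameBlock (splitOff κ c) a b ↔ sameBlock κ a b ∧ (a = c ↔ b = c) := by
  constructor
  · rintro ⟨C, hC, ha, hb⟩
    obtain rfl | ⟨D, hD, -, rfl⟩ := mem_parts_splitOff.1 hC
    · obtain rfl := mem_singleton.1 ha
      obtain rfl := mem_singleton.1 hb
      exact ⟨(blockSetoid κ).refl _, Iff.rfl⟩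
    · exact ⟨⟨D, hD, mem_of_mem_erase ha, mem_of_mem_erase hb⟩,
        iff_of_false (ne_of_mem_erase ha) (ne_of_mem_erase hb)⟩
  · rintro ⟨⟨D, hD, ha, hb⟩, hab⟩
    by_cases hac : a = c
    · exact ⟨{c}, singleton_mem_parts_splitOff, mem_singleton.2 hac, mem_singleton.2 (hab.1 hac)⟩
    · have hbc := mt hab.2 hac
      exact ⟨D.erase c, mem_parts_splitOff.2 (.inr ⟨D, hD, fun h => hac (mem_singleton.1 (h ha)),
        rfl⟩), mem_erase.2 ⟨hac, ha⟩, mem_erase.2 ⟨hbc, hb⟩⟩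

lemma blockSetoid_splitOff (κ : NCP n) (c : Fin n) :
    blockSetoid (splitOff κ c) = blockSetoid κ ⊓ Setoid.ker (· = c) := by
  ext a b
  refine sameBlock_splitOff_iff.trans (and_congr_right fun _ => ?_)
  rw [Setoid.ker_def, eq_iff_iff]

lemma isNoncrossing_splitOff (hκ : IsNoncrossing κ) (c : Fin n) : IsNoncrossing (splitOff κ c) := by
  intro x y z w hxy hyz hzw hxz hyw
  rw [sameBlock_splitOff_iff] at hxz hyw ⊢
  refine ⟨hκ x y z w hxy hyz hzw hxz.1 hyw.1, iff_of_false ?_ ?_⟩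
  · rintro rfl
    exact (hxy.trans hyz).ne' (hxz.2.1 rfl)
  · rintro rfl
    exact (hyz.trans hzw).ne' (hyw.2.1 rfl)

lemma IsNoncrossing.sameSide (hκ : IsNoncrossing κ) (hab : sameBlock κ a b)
    (hcd : sameBlock κ c d) (hac : ¬ sameBlock κ a c) : SameSide a b c d := by
  have hsymm {x y : Fin n} : sameBlock κ x y → sameBlock κ y x := (blockSetoid κ).symm
  have htrans {x y z : Fin n} : sameBlock κ x y → sameBlock κ y z → sameBlock κ x z :=
    (blockSetoid κ).trans
  wlog hlt : a ≤ b generalizing a b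
  · exact SameSide.left_comm.1
      (this (hsymm hab) (fun h => hac (htrans hab h)) (le_of_not_ge hlt))
  wlog hlt' : c ≤ d generalizing c d
  · exact SameSide.right_comm.1
      (this (hsymm hcd) (fun h => hac (htrans h (hsymm hcd))) (le_of_not_ge hlt'))
  have hacbd : ¬ (a < c ∧ c < b ∧ b < d) := fun ⟨hac', hcb, hbd⟩ =>
    hac (hκ a c b d hac' hcb hbd hab hcd)
  have hcadb : ¬ (c < a ∧ a < d ∧ d < b) := fun ⟨hca, had, hdb⟩ =>
    hac (hsymm (hκ c a d b hca had hdb hcd hab))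
  have hne {x y : Fin n} (h : ¬ sameBlock κ x y) : x ≠ y := fun hxy =>
    h (hxy ▸ (blockSetoid κ).refl x)
  have hne_ac : a ≠ c := hne hac
  have hne_ad : a ≠ d := hne fun h => hac (htrans h (hsymm hcd))
  have hne_bc : b ≠ c := hne fun h => hac (htrans hab h)
  have hne_bd : b ≠ d := hne fun h => hac (htrans hab (htrans h (hsymm hcd)))
  unfold SameSide
  omega

end Noncrossing

section Dual

variable {n : ℕ} {σ κ : NCP n} {c i j m p : Fin n}

/-- The equivalence relation on `[n]` corresponding to the dual partition `σ̃`: no chord joining two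
points of a block of `σ` separates `ĩ` from `j̃`. -/
def dualSetoid (σ : NCP n) : Setoid (Fin n) where
  r i j := ∀ a b, sameBlock σ a b → SameSide a b i j
  iseqv :=
    { refl := fun i a b _ => SameSide.self_right a b i
      symm := fun h a b hab => (h a b hab).right_symm
      trans := fun h h' a b hab => (h a b hab).right_trans (h' a b hab) }

lemma mem_cIoc_iff (hij : i ≠ j) (x : Fin n) : x ∈ cIoc i j ↔ ((x ≤ i ↔ x ≤ j) ↔ j < i) := by
  simp only [cIoc, mem_filter, mem_univ, true_and]
  grind

lemma dualRel_iff : dualRel σ i j ↔ dualSetoid σ i j := by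
  by_cases hij : i = j
  · exact iff_of_true (.inl hij) (hij ▸ (dualSetoid σ).refl i)
  have hcompl (x : Fin n) : x ∈ cIoc j i ↔ ¬ x ∈ cIoc i j := by
    rw [mem_cIoc_iff hij, mem_cIoc_iff (Ne.symm hij)]
    grind
  have hside (a b : Fin n) : SameSide a b i j ↔ (a ∈ cIoc i j ↔ b ∈ cIoc i j) := by
    simp only [mem_cIoc_iff hij, SameSide]
    tauto
  have hr : dualSetoid σ i j ↔ ∀ a b, sameBlock σ a b → SameSide a b i j := Iff.rfl
  simp only [dualRel, hij, false_or, hr, hside, hcompl, Finset.Nonempty, mem_inter, sameBlock]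
  exact ⟨fun h a b ⟨B, hB, ha, hb⟩ => by_contra fun hab => h ⟨B, hB, by grind⟩,
    fun h ⟨B, hB, ⟨a, ha, ha'⟩, b, hb, hb'⟩ => hb' ((h a b ⟨B, hB, ha, hb⟩).1 ha')⟩

lemma dualSetoid_iff_splitOff (hmc : m ≠ c) (hcm : sameBlock κ c m) :
    dualSetoid κ i j ↔ dualSetoid (splitOff κ c) i j ∧ SameSide c m i j := by
  refine ⟨fun h => ⟨fun a b hab => h a b (sameBlock_splitOff_iff.1 hab).1, h c m hcm⟩, ?_⟩
  rintro ⟨h, hside⟩ a b hab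
  -- The chord `c x` is the chord `c m` followed by the chord `m x`, which survives splitting.
  have hspoke {x : Fin n} (hcx : sameBlock κ c x) : SameSide c x i j := by
    by_cases hxc : x = c
    · exact hxc ▸ SameSide.self_left x i j
    · refine hside.left_trans (h m x (sameBlock_splitOff_iff.2 ⟨?_, iff_of_false hmc hxc⟩))
      exact (blockSetoid κ).trans ((blockSetoid κ).symm hcm) hcx
  by_cases hac : sameBlock κ c a
  · exact (SameSide.left_comm.1 (hspoke hac)).left_trans
      (hspoke ((blockSetoid κ).trans hac hab))
  · refine h a b (sameBlock_splitOff_iff.2 ⟨hab, iff_of_false ?_ ?_⟩)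
    · rintro rfl
      exact hac ((blockSetoid κ).refl a)
    · rintro rfl
      exact hac ((blockSetoid κ).symm hab)

lemma dualSetoid_le_splitOff (κ : NCP n) (c : Fin n) : dualSetoid κ ≤ dualSetoid (splitOff κ c) :=
  fun _ _ h a b hab => h a b (sameBlock_splitOff_iff.1 hab).1

lemma dualSetoid_splitOff_covBy (κ : NCP n) (hpc : p ⋖ c) : dualSetoid (splitOff κ c) p c := by
  intro a b hab
  have hac := (sameBlock_splitOff_iff.1 hab).2
  by_cases ha : a = c
  · exact ha.trans (hac.1 ha).symm ▸ SameSide.self_left b p c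
  · exact SameSide.of_covBy_of_ne hpc ha (mt hac.2 ha)

lemma not_dualSetoid_covBy (hpc : p ⋖ c) (hc : {c} ∉ κ.parts) : ¬ dualSetoid κ p c := by
  obtain ⟨m, hmc, hcm⟩ := singleton_notMem_parts_iff.1 hc
  exact fun h => SameSide.not_of_covBy_of_ne hpc hmc (h c m hcm)

lemma dualSetoid_covBy_or (hpc : p ⋖ c) (hc : {c} ∉ κ.parts)
    (hi : dualSetoid (splitOff κ c) i c) : dualSetoid κ i p ∨ dualSetoid κ i c := by
  obtain ⟨m, hmc, hcm⟩ := singleton_notMem_parts_iff.1 hc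
  have hp := dualSetoid_splitOff_covBy κ hpc
  rw [dualSetoid_iff_splitOff hmc hcm, dualSetoid_iff_splitOff hmc hcm]
  by_cases hside : SameSide c m i c
  · exact .inr ⟨hi, hside⟩
  · refine .inl ⟨(dualSetoid _).trans hi ((dualSetoid _).symm hp), ?_⟩
    exact SameSide.right_of_not_of_not hside fun h =>
      SameSide.not_of_covBy_of_ne hpc hmc h.right_symm

-- Some chord `a b` separates `c` from `i` and `j`. By noncrossingness a chord from `c` stays on its
-- own side of `a b` (or ends at `a`), so it cannot separate `i` from `j`.
lemma IsNoncrossing.dualSetoid_of_splitOff (hκ : IsNoncrossing κ) (hc : {c} ∉ κ.parts)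
    (hij : dualSetoid (splitOff κ c) i j) (hi : ¬ dualSetoid (splitOff κ c) c i) :
    dualSetoid κ i j := by
  obtain ⟨a, b, hab, hci⟩ : ∃ a b, sameBlock (splitOff κ c) a b ∧ ¬ SameSide a b c i := by
    by_contra! h
    exact hi h
  have hside {m : Fin n} (hm : m = a ∨ SameSide a b c m) : SameSide c m i j :=
    SameSide.of_separated hci (hij a b hab) hm
  obtain ⟨hab', hac⟩ := sameBlock_splitOff_iff.1 hab
  by_cases hca : sameBlock κ c a
  · refine (dualSetoid_iff_splitOff (fun ha => hci ?_) hca).2 ⟨hij, hside (.inl rfl)⟩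
    exact ha.trans (hac.1 ha).symm ▸ SameSide.self_left b c i
  · obtain ⟨m, hmc, hcm⟩ := singleton_notMem_parts_iff.1 hc
    refine (dualSetoid_iff_splitOff hmc hcm).2 ⟨hij, hside (.inr (hκ.sameSide hab' hcm ?_))⟩
    exact fun h => hca ((blockSetoid κ).symm h)

lemma IsNoncrossing.dualSetoid_splitOff (hκ : IsNoncrossing κ) (hpc : p ⋖ c)
    (hc : {c} ∉ κ.parts) : dualSetoid (splitOff κ c) = glue (dualSetoid κ) p c := by
  have hle := dualSetoid_le_splitOff κ c
  have hp := dualSetoid_splitOff_covBy κ hpc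
  ext i j
  constructor
  · intro hij
    by_cases hi : dualSetoid (splitOff κ c) i c
    · have hj := (dualSetoid _).trans ((dualSetoid _).symm hij) hi
      exact .inr ⟨dualSetoid_covBy_or hpc hc hi, dualSetoid_covBy_or hpc hc hj⟩
    · exact .inl (hκ.dualSetoid_of_splitOff hc hij fun h => hi ((dualSetoid _).symm h))
  · have hrel {x : Fin n} (hx : dualSetoid κ x p ∨ dualSetoid κ x c) :
        dualSetoid (splitOff κ c) x c :=
      hx.elim (fun h => (dualSetoid _).trans (hle h) hp) fun h => hle h
    rintro (hij | ⟨hi, hj⟩)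
    · exact hle hij
    · exact (dualSetoid _).trans (hrel hi) ((dualSetoid _).symm (hrel hj))

end Dual

section Concordant

variable {n : ℕ} {κ : NCP n} {I : Finset (Fin (2 * n))} {c p u : Fin n}

lemma bar_injective : Function.Injective (bar : Fin n → Fin (2 * n)) := fun a b h => by
  simp only [bar, Fin.mk.injEq] at h
  omega

lemma til_injective : Function.Injective (til : Fin n → Fin (2 * n)) := fun a b h => by
  simp only [til, Fin.mk.injEq] at h
  omega

lemma bar_ne_til (a b : Fin n) : bar a ≠ til b := by
  simp only [bar, til, ne_eq, Fin.mk.injEq]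
  omega

lemma card_image_inter_eq_one_iff {α β : Type*} [Fintype β] [DecidableEq β] {f : α → β}
    (hf : Function.Injective f) (S : Finset α) (I : Finset β) :
    (S.image f ∩ (univ \ I)).card = 1 ↔ ∃! b, f b ∉ I ∧ b ∈ S := by
  have himage : S.image f ∩ (univ \ I) = {b ∈ S | f b ∉ I}.image f := by
    ext x
    simp only [mem_inter, mem_image, mem_sdiff, mem_univ, true_and, mem_filter]
    grind
  rw [himage, card_image_of_injective _ hf, card_eq_one, singleton_iff_unique_mem]
  simp only [mem_filter, and_comm]

lemma card_insert_erase_of_notMem {α : Type*} [DecidableEq α] {I : Finset α} {p q : α}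
    (hp : p ∉ I) (hq : q ∈ I) : (insert p (I.erase q)).card = I.card := by
  rw [card_insert_of_notMem fun h => hp (mem_of_mem_erase h), card_erase_add_one hq]

lemma isTransversal_blockSetoid_iff (σ : NCP n) (T : Set (Fin n)) :
    IsTransversal (blockSetoid σ) T ↔ ∀ B ∈ σ.parts, ∃! b, b ∈ T ∧ b ∈ B := by
  have hiff {a : Fin n} {B : Finset (Fin n)} (hB : B ∈ σ.parts) (ha : a ∈ B) :
      (∃! b, b ∈ T ∧ blockSetoid σ a b) ↔ ∃! b, b ∈ T ∧ b ∈ B :=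
    existsUnique_congr fun b => and_congr_right fun _ => sameBlock_iff_mem hB ha
  refine ⟨fun h B hB => ?_, fun h a => ?_⟩
  · obtain ⟨a, ha⟩ := σ.nonempty_of_mem_parts hB
    exact (hiff hB ha).1 (h a)
  · have hpart := σ.part_mem.2 (mem_univ a)
    exact (hiff hpart (σ.mem_part (mem_univ a))).2 (h _ hpart)

lemma concordant_iff : Concordant κ I ↔ I.card = n - 1 ∧
    IsTransversal (blockSetoid κ) {a | bar a ∉ I} ∧
    IsTransversal (dualSetoid κ) {i | til i ∉ I} := by
  simp only [Concordant, card_image_inter_eq_one_iff bar_injective,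
    card_image_inter_eq_one_iff til_injective, mem_filter, mem_univ, true_and, dualRel_iff,
    isTransversal_blockSetoid_iff]
  rfl

lemma concordant_exchange_iff (hc : bar c ∉ I) (hu : til u ∈ I) :
    Concordant κ (insert (bar c) (I.erase (til u))) ↔ I.card = n - 1 ∧
      IsTransversal (blockSetoid κ) ({a | bar a ∉ I} \ {c}) ∧
      IsTransversal (dualSetoid κ) (insert u {i | til i ∉ I}) := by
  have hbar : {a | bar a ∉ insert (bar c) (I.erase (til u))} = {a | bar a ∉ I} \ {c} := by
    ext a
    simp [bar_injective.eq_iff, bar_ne_til, and_comm]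
  have htil : {i | til i ∉ insert (bar c) (I.erase (til u))} = insert u {i | til i ∉ I} := by
    ext i
    simp [til_injective.eq_iff, (bar_ne_til _ _).symm, or_iff_not_imp_left]
  rw [concordant_iff, hbar, htil, card_insert_erase_of_notMem hc hu]

lemma Concordant.singleton_notMem_parts (h : Concordant κ I) (hc : bar c ∈ I) :
    {c} ∉ κ.parts := by
  obtain ⟨m, ⟨hm, hcm⟩, -⟩ := (concordant_iff.1 h).2.1 c
  exact singleton_notMem_parts_iff.2 ⟨m, fun hmc => hm (hmc ▸ hc), hcm⟩

/-- The noncrossing partitions concordant with the set obtained from `I` by exchanging its element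
`q` for `p ∉ I`; empty if no such exchange is possible. -/
def exchangeESet (I : Finset (Fin (2 * n))) (p q : Fin (2 * n)) : Set (NCP n) :=
  {κ | (p ∉ I ∧ q ∈ I) ∧ κ ∈ ESet (insert p (I.erase q))}

lemma mem_exchangeESet_iff : κ ∈ exchangeESet I (bar c) (til u) ↔
    IsNoncrossing κ ∧ (I.card = n - 1 ∧ bar c ∉ I ∧
      IsTransversal (blockSetoid κ) ({a | bar a ∉ I} \ {c})) ∧
      til u ∈ I ∧ IsTransversal (dualSetoid κ) (insert u {i | til i ∉ I}) := by
  constructor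
  · rintro ⟨⟨hc, hu⟩, hκ, h⟩
    obtain ⟨hcard, hbar, htil⟩ := (concordant_exchange_iff hc hu).1 h
    exact ⟨hκ, ⟨hcard, hc, hbar⟩, hu, htil⟩
  · rintro ⟨hκ, ⟨hcard, hc, hbar⟩, hu, htil⟩
    exact ⟨⟨hc, hu⟩, hκ, (concordant_exchange_iff hc hu).2 ⟨hcard, hbar, htil⟩⟩

lemma singleton_notMem_parts_of_mem_exchangeESet {q : Fin (2 * n)}
    (h : κ ∈ exchangeESet I (bar c) q) : {c} ∉ κ.parts :=
  h.2.2.singleton_notMem_parts (mem_insert_self _ _)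

lemma concordant_splitOff_iff (hκ : IsNoncrossing κ) (hpc : p ⋖ c) (hc : {c} ∉ κ.parts) :
    Concordant (splitOff κ c) I ↔
      κ ∈ exchangeESet I (bar c) (til p) ∪ exchangeESet I (bar c) (til c) := by
  obtain ⟨m, hmc, hcm⟩ := singleton_notMem_parts_iff.1 hc
  have hglue := isTransversal_glue_iff (T := {i | til i ∉ I}) (not_dualSetoid_covBy hpc hc)
  simp only [Set.mem_ofPred_eq, not_not] at hglue
  rw [concordant_iff, blockSetoid_splitOff, hκ.dualSetoid_splitOff hpc hc, hglue,
    isTransversal_inf_ker_eq_iff (r := blockSetoid κ) hmc hcm, Set.mem_union,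
    mem_exchangeESet_iff, mem_exchangeESet_iff]
  simp only [hκ, true_and, Set.mem_ofPred_eq, ← and_or_left, and_assoc]

/-- The noncrossing partitions in which `c` is not a singleton block, that is, those which
splitting off `c` changes. -/
def nonsingletonSet (c : Fin n) : Set (NCP n) :=
  {κ | IsNoncrossing κ ∧ {c} ∉ κ.parts}

lemma nonsingletonSet_inter_preimage_ESet (hpc : p ⋖ c) (I : Finset (Fin (2 * n))) :
    nonsingletonSet c ∩ (splitOff · c) ⁻¹' ESet I =
      exchangeESet I (bar c) (til p) ∪ exchangeESet I (bar c) (til c) := by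
  ext κ
  constructor
  · rintro ⟨⟨hκ, hc⟩, -, h⟩
    exact (concordant_splitOff_iff hκ hpc hc).1 h
  · intro h
    have hκ : IsNoncrossing κ := h.elim (·.2.1) (·.2.1)
    have hc : {c} ∉ κ.parts := h.elim singleton_notMem_parts_of_mem_exchangeESet
      singleton_notMem_parts_of_mem_exchangeESet
    exact ⟨⟨hκ, hc⟩, isNoncrossing_splitOff hκ c, (concordant_splitOff_iff hκ hpc hc).2 h⟩

lemma disjoint_exchangeESet (hpc : p ⋖ c) :
    Disjoint (exchangeESet I (bar c) (til p)) (exchangeESet I (bar c) (til c)) := by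
  refine Set.disjoint_left.2 fun κ hp hc => ?_
  refine not_dualSetoid_covBy hpc (singleton_notMem_parts_of_mem_exchangeESet hp) ?_
  obtain ⟨-, -, hpI, hp⟩ := mem_exchangeESet_iff.1 hp
  obtain ⟨-, -, -, hc⟩ := mem_exchangeESet_iff.1 hc
  exact hp.rel_of_insert_of_insert (not_not.2 hpI) hc

lemma mergeSet_eq (c : Fin n) {σ : NCP n} (hc : {c} ∈ σ.parts) :
    mergeSet c σ = nonsingletonSet c ∩ (splitOff · c) ⁻¹' {σ} := by
  ext κ
  exact (and_congr_right fun _ => exists_merge_iff hc).trans and_assoc.symm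

end Concordant

section Minors

variable {k m : ℕ} {X : Matrix (Fin k) (Fin m) ℝ} {I : Finset (Fin m)} {p q : Fin m}

lemma strictMono_update_of_covBy {ι α : Type*} [Preorder ι] [DecidableEq ι] [LinearOrder α]
    {f : ι → α} (hf : StrictMono f) {r : ι} {p : α} (hp : p ∉ Set.range f)
    (hr : p ⋖ f r ∨ f r ⋖ p) : StrictMono (Function.update f r p) := by
  have hlt (i : ι) : (f i < f r → f i < p) ∧ (f r < f i → p < f i) := by
    have hne : f i ≠ p := fun h => hp ⟨i, h⟩
    obtain h | h := hr
    · exact ⟨fun hi => lt_of_le_of_ne (h.le_of_lt hi) hne, fun hi => h.lt.trans hi⟩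
    · exact ⟨fun hi => hi.trans h.lt, fun hi => lt_of_le_of_ne (h.ge_of_gt hi) hne.symm⟩
  intro i j hij
  by_cases hi : i = r <;> by_cases hj : j = r
  · exact absurd (hi.trans hj.symm) hij.ne
  · simpa only [hi, Function.update_self, Function.update_of_ne hj] using (hlt j).2 (hi ▸ hf hij)
  · simpa only [hj, Function.update_self, Function.update_of_ne hi] using (hlt i).1 (hj ▸ hf hij)
  · simpa only [Function.update_of_ne hi, Function.update_of_ne hj] using hf hij

lemma submatrix_updateCol_of_injective {l m n o R : Type*} [DecidableEq n] [DecidableEq o]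
    (A : Matrix l n R) {e : o → n} (he : Function.Injective e) (f : m → l) (j : o) (v : l → R) :
    (A.updateCol (e j) v).submatrix f e = (A.submatrix f e).updateCol j (v ∘ f) := by
  ext i j'
  simp only [Matrix.submatrix_apply, Matrix.updateCol_apply, he.eq_iff, Function.comp_apply]

lemma mul_one_add_matE (X : Matrix (Fin k) (Fin m) ℝ) (p q : Fin m) (t : ℝ) :
    X * (1 + matE m p q t) = X.updateCol q (X.col q + t • X.col p) := by
  have htransvection : 1 + matE m p q t = Matrix.transvection p q t := by
    ext i j
    simp [matE, Matrix.transvection, Matrix.single_apply, Fin.ext_iff, eq_comm]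
  rw [htransvection]
  ext i j
  by_cases hj : j = q
  · simp [hj]
  · simp [hj]

lemma minorOn_eq_det (X : Matrix (Fin k) (Fin m) ℝ) (hI : I.card = k) :
    minorOn X I = (X.submatrix id (I.orderEmbOfFin hI)).det :=
  dif_pos hI

lemma minorOn_updateCol_of_notMem (hq : q ∉ I) (v : Fin k → ℝ) :
    minorOn (X.updateCol q v) I = minorOn X I := by
  unfold minorOn
  split_ifs with hI
  · congr 1
    ext i j
    have hj : I.orderEmbOfFin hI j ≠ q := fun h => hq (h ▸ I.orderEmbOfFin_mem hI j)
    simp [hj]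
  · rfl

lemma minorOn_updateCol_orderEmbOfFin (X : Matrix (Fin k) (Fin m) ℝ) (hI : I.card = k) (r : Fin k)
    (v : Fin k → ℝ) : minorOn (X.updateCol (I.orderEmbOfFin hI r) v) I =
      ((X.submatrix id (I.orderEmbOfFin hI)).updateCol r v).det := by
  rw [minorOn_eq_det _ hI, submatrix_updateCol_of_injective X (I.orderEmbOfFin hI).injective,
    Function.comp_id]

lemma exists_orderEmbOfFin_eq (hI : I.card = k) (hq : q ∈ I) : ∃ r, I.orderEmbOfFin hI r = q := by
  rwa [← Set.mem_range, range_orderEmbOfFin]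

lemma minorOn_updateCol_add_smul (hI : I.card = k) (hq : q ∈ I) (v w : Fin k → ℝ) (t : ℝ) :
    minorOn (X.updateCol q (v + t • w)) I =
      minorOn (X.updateCol q v) I + t * minorOn (X.updateCol q w) I := by
  obtain ⟨r, rfl⟩ := exists_orderEmbOfFin_eq hI hq
  simp only [minorOn_updateCol_orderEmbOfFin, Matrix.det_updateCol_add, Matrix.det_updateCol_smul]

lemma minorOn_updateCol_col_of_mem (hI : I.card = k) (hpq : p ≠ q) (hp : p ∈ I) (hq : q ∈ I) :
    minorOn (X.updateCol q (X.col p)) I = 0 := by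
  obtain ⟨r, rfl⟩ := exists_orderEmbOfFin_eq hI hq
  obtain ⟨s, rfl⟩ := exists_orderEmbOfFin_eq hI hp
  have hsr : s ≠ r := fun h => hpq (h ▸ rfl)
  rw [minorOn_updateCol_orderEmbOfFin]
  exact Matrix.det_zero_of_column_eq hsr fun i => by simp [hsr]

lemma minorOn_updateCol_col_of_notMem (hI : I.card = k) (hpq : p ⋖ q ∨ q ⋖ p) (hp : p ∉ I)
    (hq : q ∈ I) : minorOn (X.updateCol q (X.col p)) I = minorOn X (insert p (I.erase q)) := by
  have hcard : (insert p (I.erase q)).card = k := (card_insert_erase_of_notMem hp hq).trans hI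
  obtain ⟨r, rfl⟩ := exists_orderEmbOfFin_eq hI hq
  have hmem (s : Fin k) : Function.update (I.orderEmbOfFin hI) r p s ∈
      insert p (I.erase (I.orderEmbOfFin hI r)) := by
    by_cases hs : s = r <;> simp [hs]
  have hmono : StrictMono (Function.update (I.orderEmbOfFin hI) r p) :=
    strictMono_update_of_covBy (I.orderEmbOfFin hI).strictMono (by simpa using hp) hpq
  rw [minorOn_updateCol_orderEmbOfFin, minorOn_eq_det X hcard,
    ← orderEmbOfFin_unique hcard hmem hmono]
  congr 1
  ext i s
  by_cases hs : s = r <;> simp [hs]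

lemma minorOn_mul_one_add_matE (X : Matrix (Fin k) (Fin m) ℝ) (hI : I.card = k)
    (hpq : p ⋖ q ∨ q ⋖ p) (t : ℝ) :
    minorOn (X * (1 + matE m p q t)) I =
      minorOn X I + t * if p ∉ I ∧ q ∈ I then minorOn X (insert p (I.erase q)) else 0 := by
  rw [mul_one_add_matE]
  by_cases hq : q ∈ I
  · have hself : X.updateCol q (X.col q) = X := X.updateCol_eq_self q
    have hne : p ≠ q := hpq.elim (·.ne) (·.ne')
    rw [minorOn_updateCol_add_smul hI hq, hself]
    split_ifs with h
    · rw [minorOn_updateCol_col_of_notMem hI hpq h.1 hq]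
    · rw [minorOn_updateCol_col_of_mem hI hne (by tauto) hq]
  · simp only [minorOn_updateCol_of_notMem hq, hq, and_false, if_false, mul_zero, add_zero]

lemma bar_covBy_til {n : ℕ} (c : Fin n) : bar c ⋖ til c := by
  simp [Fin.covBy_iff, bar, til]

lemma til_covBy_bar {n : ℕ} {p c : Fin n} (hpc : p ⋖ c) : til p ⋖ bar c := by
  rw [Fin.covBy_iff, Nat.covBy_iff_add_one_eq] at hpc ⊢
  simp only [bar, til]
  omega

lemma minorOn_mul_uB {n : ℕ} (X : Matrix (Fin k) (Fin (2 * n)) ℝ) {I : Finset (Fin (2 * n))}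
    (hI : I.card = k) {c p : Fin n} (hpc : p ⋖ c) (t : ℝ) :
    minorOn (X * uB (2 * n) (2 * (c : ℕ) + 1) t) I = minorOn X I +
      t * ((if bar c ∉ I ∧ til p ∈ I then minorOn X (insert (bar c) (I.erase (til p))) else 0) +
        if bar c ∉ I ∧ til c ∈ I then minorOn X (insert (bar c) (I.erase (til c))) else 0) := by
  have hx : xB (2 * n) (2 * (c : ℕ) + 1) t = 1 + matE (2 * n) (bar c) (til c) t := rfl
  have hy : yB (2 * n) (2 * (c : ℕ) + 1 - 1) t = 1 + matE (2 * n) (bar c) (til p) t := by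
    rw [Fin.covBy_iff, Nat.covBy_iff_add_one_eq] at hpc
    have hp : 2 * (c : ℕ) + 1 - 1 - 1 = 2 * (p : ℕ) + 1 := by omega
    rw [yB, hp]
    rfl
  rw [uB, hx, hy, ← Matrix.mul_assoc, minorOn_mul_one_add_matE _ hI (.inr (til_covBy_bar hpc)),
    minorOn_mul_one_add_matE X hI (.inl (bar_covBy_til c))]
  by_cases h : bar c ∉ I ∧ til p ∈ I
  · have hcard : (insert (bar c) (I.erase (til p))).card = k :=
      (card_insert_erase_of_notMem h.1 h.2).trans hI
    simp only [if_pos h, minorOn_mul_one_add_matE X hcard (.inl (bar_covBy_til c)),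
      mem_insert_self, not_true, false_and, if_false, mul_zero, add_zero]
    ring
  · simp only [if_neg h]
    ring

end Minors

section Sums

lemma finsum_mem_fiberwise {α β M : Type*} [Finite α] [Finite β] [AddCommMonoid M] (S : Set α)
    (E : Set β) (f : α → β) (g : α → M) :
    ∑ᶠ b ∈ E, ∑ᶠ a ∈ S ∩ f ⁻¹' {b}, g a = ∑ᶠ a ∈ S ∩ f ⁻¹' E, g a := by
  have hdisj : E.PairwiseDisjoint fun b => S ∩ f ⁻¹' {b} := fun b _ b' _ hb =>
    (Set.pairwiseDisjoint_fiber f E ‹_› ‹_› hb).mono Set.inter_subset_right Set.inter_subset_right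
  rw [← finsum_mem_biUnion hdisj E.toFinite fun _ _ => Set.toFinite _, ← Set.inter_iUnion₂,
    Set.biUnion_preimage_singleton]

variable {n : ℕ} {X : Matrix (Fin (n - 1)) (Fin (2 * n)) ℝ} {L : NCP n → ℝ}

lemma finsum_mem_exchangeESet
    (hL : ∀ I : Finset (Fin (2 * n)), I.card = n - 1 → minorOn X I = ∑ᶠ σ ∈ ESet I, L σ)
    {I : Finset (Fin (2 * n))} (hI : I.card = n - 1) (p q : Fin (2 * n)) :
    ∑ᶠ κ ∈ exchangeESet I p q, L κ =
      if p ∉ I ∧ q ∈ I then minorOn X (insert p (I.erase q)) else 0 := by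
  split_ifs with h
  · rw [hL _ ((card_insert_erase_of_notMem h.1 h.2).trans hI)]
    simp only [exchangeESet, h, and_self, not_false_eq_true, true_and, Set.ofPred_mem_eq]
  · simp only [exchangeESet, h, false_and, Set.ofPred_false, finsum_mem_empty]

lemma nonsingletonSet_inter_fiber_eq_empty {σ : NCP n} {c : Fin n} (hc : {c} ∉ σ.parts) :
    nonsingletonSet c ∩ (splitOff · c) ⁻¹' {σ} = ∅ :=
  Set.eq_empty_of_forall_notMem fun _ ⟨_, h⟩ =>
    hc (Set.mem_singleton_iff.1 h ▸ singleton_mem_parts_splitOff)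

end Sums

theorem stmt17 (n k : ℕ) (hk2 : 2 ≤ k) (hkn : k ≤ n)
    (X : Matrix (Fin (n-1)) (Fin (2*n)) ℝ) (L : NCP n → ℝ)
    (hL : ∀ I : Finset (Fin (2*n)), I.card = n-1 → minorOn X I = ∑ᶠ σ ∈ ESet I, L σ)
    (t : ℝ) (L' : NCP n → ℝ) (kb : Fin n) (hkb : (kb:ℕ) = k - 1)
    (hL'1 : ∀ σ : NCP n, ({kb} : Finset (Fin n)) ∈ σ.parts →
      L' σ = L σ + t * ∑ᶠ κ ∈ mergeSet kb σ, L κ)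
    (hL'2 : ∀ σ : NCP n, ({kb} : Finset (Fin n)) ∉ σ.parts → L' σ = L σ) :
    ∀ I : Finset (Fin (2*n)), I.card = n-1 →
      minorOn (X * uB (2*n) (2*k-1) t) I = ∑ᶠ σ ∈ ESet I, L' σ := by
  intro I hI
  obtain ⟨p, hp⟩ : ∃ p : Fin n, p ⋖ kb :=
    ⟨⟨k - 2, by omega⟩, by rw [Fin.covBy_iff, Nat.covBy_iff_add_one_eq]; simp only; omega⟩
  have hL' (σ : NCP n) :
      L' σ = L σ + t * ∑ᶠ κ ∈ nonsingletonSet kb ∩ (splitOff · kb) ⁻¹' {σ}, L κ := by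
    by_cases hc : {kb} ∈ σ.parts
    · rw [hL'1 σ hc, mergeSet_eq kb hc]
    · rw [hL'2 σ hc, nonsingletonSet_inter_fiber_eq_empty hc, finsum_mem_empty, mul_zero, add_zero]
  have hindex : 2 * k - 1 = 2 * (kb : ℕ) + 1 := by omega
  calc minorOn (X * uB (2 * n) (2 * k - 1) t) I
      = minorOn X I + t * (∑ᶠ κ ∈ exchangeESet I (bar kb) (til p), L κ +
          ∑ᶠ κ ∈ exchangeESet I (bar kb) (til kb), L κ) := by
        rw [hindex, minorOn_mul_uB X hI hp, finsum_mem_exchangeESet hL hI,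
          finsum_mem_exchangeESet hL hI]
    _ = minorOn X I + t * ∑ᶠ κ ∈ nonsingletonSet kb ∩ (splitOff · kb) ⁻¹' ESet I, L κ := by
        rw [nonsingletonSet_inter_preimage_ESet hp,
          finsum_mem_union (disjoint_exchangeESet hp) (Set.toFinite _) (Set.toFinite _)]
    _ = ∑ᶠ σ ∈ ESet I, L' σ := by
        simp only [hL', hL I hI]
        rw [finsum_mem_add_distrib (Set.toFinite _), ← finsum_mem_fiberwise, mul_finsum_mem]

end
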